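/- Let d ≥ 2, let X be a real Banach space, let Ω ⊆ ℝ^d be open and non-empty, let 1 < p < ∞ and j, k ∈ {1,…,d}. Suppose there exists a constant C > 0 such that ‖D_jD_k(Φ ∗ f)‖_{L^p(Ω, X)} ≤ C ‖f‖_{L^p(Ω, X)} for all f ∈ C_c^∞(Ω, X) (where f is extended by 0 to ℝ^d to form Φ ∗ f). Then the same estimate holds globally: ‖D_jD_k(Φ ∗ f)‖_{L^p(ℝ^d, X)} ≤ C ‖f‖_{L^p(ℝ^d, X)} for all f ∈ C_c^∞(ℝ^d, X); in particular the second-order Riesz transform R_jR_k extends to a bounded operator on L^p(ℝ^d, X). -/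

import Mathlib

open MeasureTheory
open scoped ENNReal

/-- The `i`-th standard basis vector of `ℝ^d`. -/
noncomputable def stdBasis {d : ℕ} (i : Fin d) : EuclideanSpace ℝ (Fin d) :=
  EuclideanSpace.single i (1 : ℝ)

/-- The second-order partial derivative `DⱼDₖ u` of a function `u : ℝ^d → X`. -/
noncomputable def secondPartial {d : ℕ} {X : Type*} [NormedAddCommGroup X]
    [NormedSpace ℝ X] (j k : Fin d) (u : EuclideanSpace ℝ (Fin d) → X)
    (x : EuclideanSpace ℝ (Fin d)) : X :=
  fderiv ℝ (fun y => fderiv ℝ u y (stdBasis k)) x (stdBasis j)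

/-- The fundamental solution of the Laplace equation on `ℝ^d`. -/
noncomputable def fundSol (d : ℕ) (ξ : EuclideanSpace ℝ (Fin d)) : ℝ :=
  if d = 2 then (2 * Real.pi)⁻¹ * Real.log ‖ξ‖
  else ((d : ℝ) * ((2 : ℝ) - d) *
      (volume (Metric.ball (0 : EuclideanSpace ℝ (Fin d)) 1)).toReal)⁻¹ *
    ‖ξ‖ ^ ((2 : ℝ) - d)

/-- The Newtonian potential `Φ ∗ f`. -/
noncomputable def newtonianPotential {d : ℕ} {X : Type*} [NormedAddCommGroup X]
    [NormedSpace ℝ X] [CompleteSpace X] (f : EuclideanSpace ℝ (Fin d) → X)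
    (ξ : EuclideanSpace ℝ (Fin d)) : X :=
  ∫ η, fundSol d (ξ - η) • f η

/-!
The fundamental solution is homogeneous of degree `2 - d` up to an additive constant, so on
Newtonian potentials a dilation `x ↦ c • x` acts by the factor `c ^ 2`, again up to an additive
constant. Two derivatives remove the constant and the factor: `f ↦ DⱼDₖ(Φ ∗ f)` commutes with
translations and dilations. Both sides of the estimate scale by the same power of `c`, so the
estimate with constant `C` passes from a ball inside `Ω` to all the balls `B(0, n r)`, and these
exhaust `ℝ^d`.
-/

theorem eLpNorm_restrict_iUnion_of_directed {α ε ι : Type*} [MeasurableSpace α]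
    [TopologicalSpace ε] [ContinuousENorm ε] [Countable ι] {μ : Measure α} {p : ℝ≥0∞}
    (hp : p ≠ 0) (g : α → ε) {s : ι → Set α} (hs : Directed (· ⊆ ·) s) :
    eLpNorm g p (μ.restrict (⋃ i, s i)) = ⨆ i, eLpNorm g p (μ.restrict (s i)) := by
  refine le_antisymm ?_ (iSup_le fun i ↦ eLpNorm_mono_measure g
    (Measure.restrict_mono (Set.subset_iUnion s i) le_rfl))
  rcases eq_or_ne p ∞ with rfl | hp_top
  · simp only [eLpNorm_exponent_top]
    refine essSup_le_of_ae_le _ ((ae_restrict_iUnion_iff s _).2 fun i ↦ ?_)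
    filter_upwards [enorm_ae_le_eLpNormEssSup g (μ.restrict (s i))] with x hx
    exact hx.trans (le_iSup (fun i ↦ eLpNormEssSup g (μ.restrict (s i))) i)
  · have hp_pos : 0 < p.toReal := ENNReal.toReal_pos hp hp_top
    have lintegral_le (i : ι) : ∫⁻ x in s i, ‖g x‖ₑ ^ p.toReal ∂μ ≤
        (⨆ i, eLpNorm g p (μ.restrict (s i))) ^ p.toReal := by
      rw [← ENNReal.rpow_inv_le_iff hp_pos, ← one_div,
        ← eLpNorm_eq_lintegral_rpow_enorm_toReal hp hp_top]
      exact le_iSup (fun i ↦ eLpNorm g p (μ.restrict (s i))) i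
    rw [eLpNorm_eq_lintegral_rpow_enorm_toReal hp hp_top, one_div,
      ENNReal.rpow_inv_le_iff hp_pos, setLIntegral_iUnion_of_directed _ hs]
    exact iSup_le lintegral_le

section Scaling

variable {E : Type*} [NormedAddCommGroup E] [NormedSpace ℝ E] [MeasurableSpace E] [BorelSpace E]
  [FiniteDimensional ℝ E] (μ : Measure E) [μ.IsAddHaarMeasure]

theorem locallyIntegrable_log_norm [Nontrivial E] :
    LocallyIntegrable (fun x : E ↦ Real.log ‖x‖) μ := by
  rw [locallyIntegrable_iff]
  intro K hK
  obtain ⟨r, hr, hKr⟩ := hK.isBounded.exists_pos_norm_lt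
  have radial : IntegrableOn (fun y : ℝ ↦ y ^ (Module.finrank ℝ E - 1) • Real.log y)
      (Set.Ioo 0 r) := by
    have := (intervalIntegral.intervalIntegrable_log' (a := 0) (b := r)).continuousOn_mul
      (continuous_pow (Module.finrank ℝ E - 1)).continuousOn
    rwa [intervalIntegrable_iff_integrableOn_Ioo_of_le hr.le] at this
  exact ((integrableOn_fun_norm_addHaar μ).2 radial).mono_set
    fun x hx ↦ mem_ball_zero_iff.2 (hKr x hx)

theorem map_smul_sub_addHaar {c : ℝ} (hc : c ≠ 0) (x₀ : E) :
    μ.map (fun x ↦ c • (x - x₀)) = ENNReal.ofReal |(c ^ Module.finrank ℝ E)⁻¹| • μ := by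
  change μ.map ((c • ·) ∘ (· - x₀)) = _
  rw [← Measure.map_map (measurable_const_smul c) (measurable_sub_const x₀),
    map_sub_right_eq_self, Measure.map_addHaar_smul μ hc]

theorem eLpNorm_comp_smul_sub {ε : Type*} [TopologicalSpace ε] [ContinuousENorm ε] (g : E → ε)
    (p : ℝ≥0∞) {c : ℝ} (hc : c ≠ 0) (x₀ : E) (s : Set E) :
    eLpNorm (fun x ↦ g (c • (x - x₀))) p (μ.restrict ((fun x ↦ c • (x - x₀)) ⁻¹' s)) =
      ENNReal.ofReal |(c ^ Module.finrank ℝ E)⁻¹| ^ (1 / p).toReal *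
        eLpNorm g p (μ.restrict s) := by
  have hT : MeasurableEmbedding fun x : E ↦ c • (x - x₀) :=
    ((Homeomorph.subRight x₀).trans (Homeomorph.smulOfNeZero c hc)).measurableEmbedding
  have hJ : ENNReal.ofReal |(c ^ Module.finrank ℝ E)⁻¹| ≠ 0 :=
    (ENNReal.ofReal_pos.2 (abs_pos.2 (inv_ne_zero (pow_ne_zero _ hc)))).ne'
  rw [← smul_eq_mul, ← eLpNorm_smul_measure_of_ne_zero hJ, ← Measure.restrict_smul,
    ← map_smul_sub_addHaar μ hc x₀, hT.restrict_map, hT.eLpNorm_map_measure]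
  rfl

end Scaling

section SecondPartial

theorem fderiv_fun_const_smul_field {𝕜 E F : Type*} [NontriviallyNormedField 𝕜]
    [NormedAddCommGroup E] [NormedSpace 𝕜 E] [NormedAddCommGroup F] [NormedSpace 𝕜 F]
    (f : E → F) (c : 𝕜) (x : E) : fderiv 𝕜 (fun y ↦ c • f y) x = c • fderiv 𝕜 f x :=
  congrFun (fderiv_const_smul_field c) x

variable {d : ℕ} {X : Type*} [NormedAddCommGroup X] [NormedSpace ℝ X] (j k : Fin d)
  (u : EuclideanSpace ℝ (Fin d) → X) (x : EuclideanSpace ℝ (Fin d))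

theorem secondPartial_add_const (b : X) :
    secondPartial j k (fun y ↦ u y + b) x = secondPartial j k u x := by
  simp only [secondPartial, fderiv_add_const]

theorem secondPartial_const_smul (c : ℝ) :
    secondPartial j k (fun y ↦ c • u y) x = c • secondPartial j k u x := by
  simp only [secondPartial, fderiv_fun_const_smul_field, smul_apply]

theorem secondPartial_comp_sub (x₀ : EuclideanSpace ℝ (Fin d)) :
    secondPartial j k (fun y ↦ u (y - x₀)) x = secondPartial j k u (x - x₀) := by
  simp only [secondPartial, fderiv_comp_sub]
  rw [fderiv_comp_sub (f := fun y ↦ fderiv ℝ u y (stdBasis k))]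

theorem secondPartial_comp_smul (c : ℝ) :
    secondPartial j k (fun y ↦ u (c • y)) x = c ^ 2 • secondPartial j k u (c • x) := by
  simp only [secondPartial, fderiv_comp_smul, fderiv_fun_const_smul_field, smul_apply]
  rw [fderiv_comp_smul (f := fun y ↦ fderiv ℝ u y (stdBasis k)), smul_apply, smul_smul, sq]

end SecondPartial

section FundamentalSolution

variable {d : ℕ}

theorem fundSol_two (ξ : EuclideanSpace ℝ (Fin 2)) :
    fundSol 2 ξ = (2 * Real.pi)⁻¹ * Real.log ‖ξ‖ :=
  if_pos rfl

theorem exists_fundSol_eq_mul_rpow_norm (hd : d ≠ 2) :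
    ∃ a : ℝ, ∀ ξ : EuclideanSpace ℝ (Fin d), fundSol d ξ = a * ‖ξ‖ ^ ((2 : ℝ) - d) :=
  ⟨_, fun _ ↦ if_neg hd⟩

theorem exists_fundSol_smul {c : ℝ} (hc : 0 < c) :
    ∃ a : ℝ, ∀ ξ : EuclideanSpace ℝ (Fin d), ξ ≠ 0 →
      fundSol d (c • ξ) = c ^ ((2 : ℝ) - d) * fundSol d ξ + a := by
  rcases eq_or_ne d 2 with rfl | hd
  · refine ⟨(2 * Real.pi)⁻¹ * Real.log c, fun ξ hξ ↦ ?_⟩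
    rw [fundSol_two, fundSol_two, norm_smul, Real.norm_of_nonneg hc.le,
      Real.log_mul hc.ne' (norm_ne_zero_iff.2 hξ), Nat.cast_ofNat, sub_self, Real.rpow_zero]
    ring
  · obtain ⟨a, ha⟩ := exists_fundSol_eq_mul_rpow_norm hd
    refine ⟨0, fun ξ _ ↦ ?_⟩
    rw [ha, ha, norm_smul, Real.norm_of_nonneg hc.le, Real.mul_rpow hc.le (norm_nonneg ξ)]
    ring

theorem locallyIntegrable_fundSol [NeZero d] : LocallyIntegrable (fundSol d) volume := by
  rcases eq_or_ne d 2 with rfl | hd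
  · rw [funext fundSol_two]
    exact (locallyIntegrable_log_norm volume).smul (2 * Real.pi)⁻¹
  · obtain ⟨a, ha⟩ := exists_fundSol_eq_mul_rpow_norm hd
    rw [funext ha]
    refine locallyIntegrable_of_norm_le_rpow (C := |a|) (α := (d : ℝ) - 2) ?_ ?_ ?_ ?_
    · rw [finrank_euclideanSpace_fin]
      exact NeZero.one_le
    · rw [finrank_euclideanSpace_fin]
      linarith
    · refine ae_of_all _ fun ξ ↦ ?_
      rw [neg_sub, norm_mul, Real.norm_eq_abs, Real.norm_of_nonneg (by positivity)]
    · exact Measurable.aestronglyMeasurable (by fun_prop)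

end FundamentalSolution

section NewtonianPotential

variable {d : ℕ} {X : Type*} [NormedAddCommGroup X] [NormedSpace ℝ X]
  {f : EuclideanSpace ℝ (Fin d) → X}

theorem integrable_fundSol_sub_smul [NeZero d] (hf : Continuous f) (hs : HasCompactSupport f)
    (ξ : EuclideanSpace ℝ (Fin d)) : Integrable fun η ↦ fundSol d (ξ - η) • f η := by
  have h := locallyIntegrable_fundSol.integrable_smul_right_of_hasCompactSupport
    (g := fun ζ ↦ f (ξ - ζ)) (hf.comp (continuous_sub_left ξ))
    (hs.comp_homeomorph (Homeomorph.subLeft ξ))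
  simpa only [sub_sub_cancel] using h.comp_sub_left ξ

variable [CompleteSpace X]

theorem newtonianPotential_comp_sub (f : EuclideanSpace ℝ (Fin d) → X)
    (x₀ ξ : EuclideanSpace ℝ (Fin d)) :
    newtonianPotential (fun y ↦ f (y - x₀)) ξ = newtonianPotential f (ξ - x₀) := by
  rw [newtonianPotential, newtonianPotential,
    ← integral_sub_right_eq_self (fun η ↦ fundSol d (ξ - x₀ - η) • f η) x₀]
  simp only [sub_sub_sub_cancel_right]

theorem exists_newtonianPotential_smul [NeZero d] (hf : Continuous f) (hs : HasCompactSupport f)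
    {c : ℝ} (hc : 0 < c) :
    ∃ b : X, ∀ ξ, newtonianPotential f (c • ξ) =
      c ^ 2 • newtonianPotential (fun y ↦ f (c • y)) ξ + b := by
  obtain ⟨a, ha⟩ := exists_fundSol_smul (d := d) hc
  have hfc : Continuous fun y ↦ f (c • y) := hf.comp (continuous_const_smul c)
  have hsc : HasCompactSupport fun y ↦ f (c • y) :=
    hs.comp_homeomorph (Homeomorph.smulOfNeZero c hc.ne')
  refine ⟨c ^ d • a • ∫ η, f (c • η), fun ξ ↦ ?_⟩
  have change_of_variables : newtonianPotential f (c • ξ) =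
      c ^ d • ∫ η, fundSol d (c • (ξ - η)) • f (c • η) := by
    have h := Measure.integral_comp_smul_of_nonneg volume
      (fun ζ ↦ fundSol d (c • ξ - ζ) • f ζ) c (hR := hc.le)
    rw [finrank_euclideanSpace_fin] at h
    simp only [smul_sub, h, smul_inv_smul₀ (pow_pos hc d).ne', newtonianPotential]
  have homogeneity : (fun η ↦ fundSol d (c • (ξ - η)) • f (c • η)) =ᵐ[volume]
      fun η ↦ c ^ ((2 : ℝ) - d) • fundSol d (ξ - η) • f (c • η) + a • f (c • η) := by
    filter_upwards [Measure.ae_ne volume ξ] with η hη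
    rw [ha _ (sub_ne_zero.2 hη.symm), add_smul, mul_smul]
  rw [change_of_variables, integral_congr_ae homogeneity,
    integral_add ((integrable_fundSol_sub_smul hfc hsc ξ).fun_smul _)
      ((hfc.integrable_of_hasCompactSupport hsc).fun_smul a),
    integral_smul, integral_smul, smul_add, smul_smul, ← Real.rpow_natCast, ← Real.rpow_add hc,
    add_sub_cancel, Real.rpow_ofNat, newtonianPotential]

theorem secondPartial_newtonianPotential_comp_smul (hf : Continuous f) (hs : HasCompactSupport f)
    (j k : Fin d) {c : ℝ} (hc : 0 < c) (ξ : EuclideanSpace ℝ (Fin d)) :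
    secondPartial j k (newtonianPotential fun y ↦ f (c • y)) ξ =
      secondPartial j k (newtonianPotential f) (c • ξ) := by
  have : NeZero d := ⟨j.pos.ne'⟩
  obtain ⟨b, hb⟩ := exists_newtonianPotential_smul hf hs hc
  refine smul_right_injective X (pow_pos hc 2).ne' ?_
  beta_reduce
  rw [← secondPartial_comp_smul, funext hb, secondPartial_add_const, secondPartial_const_smul]

theorem secondPartial_newtonianPotential_comp_smul_sub (hf : Continuous f)
    (hs : HasCompactSupport f) (j k : Fin d) {c : ℝ} (hc : 0 < c)
    (x₀ ξ : EuclideanSpace ℝ (Fin d)) :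
    secondPartial j k (newtonianPotential fun y ↦ f (c • (y - x₀))) ξ =
      secondPartial j k (newtonianPotential f) (c • (ξ - x₀)) := by
  rw [funext (newtonianPotential_comp_sub (fun y ↦ f (c • y)) x₀), secondPartial_comp_sub,
    secondPartial_newtonianPotential_comp_smul hf hs j k hc]

end NewtonianPotential

/-- The estimate `‖DⱼDₖ(Φ ∗ f)‖_{L^p(S, X)} ≤ C ‖f‖_{L^p(S, X)}` for all `f ∈ C_c^∞(S, X)`, where
`f` is given as a function on `ℝ^d` whose support lies in `S`. -/
def NewtonianEstimate {d : ℕ} (X : Type*) [NormedAddCommGroup X] [NormedSpace ℝ X]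
    [CompleteSpace X] (j k : Fin d) (p C : ℝ≥0∞) (S : Set (EuclideanSpace ℝ (Fin d))) : Prop :=
  ∀ f : EuclideanSpace ℝ (Fin d) → X, ContDiff ℝ (⊤ : ℕ∞) f → HasCompactSupport f →
    tsupport f ⊆ S →
      eLpNorm (secondPartial j k (newtonianPotential f)) p (volume.restrict S) ≤
        C * eLpNorm f p (volume.restrict S)

namespace NewtonianEstimate

variable {d : ℕ} {X : Type*} [NormedAddCommGroup X] [NormedSpace ℝ X] [CompleteSpace X]
  {j k : Fin d} {p C : ℝ≥0∞} {S T : Set (EuclideanSpace ℝ (Fin d))}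

theorem mono (hT : NewtonianEstimate X j k p C T) (hST : S ⊆ T) :
    NewtonianEstimate X j k p C S := by
  intro f hf hs hfS
  have hf_supp : f.support ⊆ S := (subset_tsupport f).trans hfS
  calc eLpNorm (secondPartial j k (newtonianPotential f)) p (volume.restrict S)
      ≤ eLpNorm (secondPartial j k (newtonianPotential f)) p (volume.restrict T) :=
        eLpNorm_mono_measure _ (Measure.restrict_mono hST le_rfl)
    _ ≤ C * eLpNorm f p (volume.restrict T) := hT f hf hs (hfS.trans hST)
    _ = C * eLpNorm f p (volume.restrict S) := by
        rw [eLpNorm_restrict_eq_of_support_subset hf_supp,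
          eLpNorm_restrict_eq_of_support_subset (hf_supp.trans hST)]

theorem of_preimage_smul_sub {c : ℝ} (hc : 0 < c) (x₀ : EuclideanSpace ℝ (Fin d))
    (h : NewtonianEstimate X j k p C ((fun x ↦ c • (x - x₀)) ⁻¹' S)) :
    NewtonianEstimate X j k p C S := by
  intro f hf hs hfS
  let dilation : EuclideanSpace ℝ (Fin d) ≃ₜ EuclideanSpace ℝ (Fin d) :=
    (Homeomorph.subRight x₀).trans (Homeomorph.smulOfNeZero c hc.ne')
  have hsupp : tsupport (f ∘ dilation) ⊆ dilation ⁻¹' S :=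
    (tsupport_comp_eq_preimage f dilation).trans_subset (Set.preimage_mono hfS)
  have h_dilated := h (f ∘ dilation) (hf.comp ((contDiff_id.sub contDiff_const).const_smul c))
    (hs.comp_homeomorph dilation) hsupp
  change eLpNorm (secondPartial j k (newtonianPotential fun y ↦ f (c • (y - x₀)))) p _ ≤
    C * eLpNorm (fun y ↦ f (c • (y - x₀))) p _ at h_dilated
  rw [funext (secondPartial_newtonianPotential_comp_smul_sub hf.continuous hs j k hc x₀),
    eLpNorm_comp_smul_sub volume _ p hc.ne', eLpNorm_comp_smul_sub volume f p hc.ne',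
    mul_left_comm] at h_dilated
  refine (ENNReal.mul_le_mul_iff_right ?_ ?_).1 h_dilated
  · refine (ENNReal.rpow_pos (ENNReal.ofReal_pos.2 ?_) ENNReal.ofReal_ne_top).ne'
    positivity
  · exact ENNReal.rpow_ne_top_of_nonneg ENNReal.toReal_nonneg ENNReal.ofReal_ne_top

theorem iUnion_of_directed {ι : Type*} [Countable ι] [Nonempty ι] (hp : p ≠ 0)
    {s : ι → Set (EuclideanSpace ℝ (Fin d))} (hs_open : ∀ i, IsOpen (s i))
    (hs_dir : Directed (· ⊆ ·) s) (h : ∀ i, NewtonianEstimate X j k p C (s i)) :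
    NewtonianEstimate X j k p C (⋃ i, s i) := by
  intro f hf hs hf_supp
  obtain ⟨i₀, hi₀⟩ := hs.isCompact.elim_directed_cover s hs_open hf_supp hs_dir
  rw [eLpNorm_restrict_iUnion_of_directed hp (secondPartial j k (newtonianPotential f)) hs_dir]
  refine iSup_le fun i ↦ ?_
  obtain ⟨m, him, hi₀m⟩ := hs_dir i i₀
  calc eLpNorm (secondPartial j k (newtonianPotential f)) p (volume.restrict (s i))
      ≤ eLpNorm (secondPartial j k (newtonianPotential f)) p (volume.restrict (s m)) :=
        eLpNorm_mono_measure _ (Measure.restrict_mono him le_rfl)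
    _ ≤ C * eLpNorm f p (volume.restrict (s m)) := h m f hf hs (hi₀.trans hi₀m)
    _ ≤ C * eLpNorm f p (volume.restrict (⋃ i, s i)) := by
        gcongr
        exact Set.subset_iUnion s m

end NewtonianEstimate

theorem newtonian_estimate_on_domain_implies_global_general {d : ℕ} {X : Type*}
    [NormedAddCommGroup X] [NormedSpace ℝ X] [CompleteSpace X]
    {Ω : Set (EuclideanSpace ℝ (Fin d))} (hΩ : (interior Ω).Nonempty) {p C : ℝ≥0∞} (hp : p ≠ 0)
    {j k : Fin d} (h : NewtonianEstimate X j k p C Ω) :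
    NewtonianEstimate X j k p C Set.univ := by
  obtain ⟨x₀, hx₀⟩ := hΩ
  obtain ⟨r, hr, hball⟩ := Metric.mem_nhds_iff.1 (mem_interior_iff_mem_nhds.1 hx₀)
  let B (n : ℕ) := Metric.ball (0 : EuclideanSpace ℝ (Fin d)) ((n + 1) * r)
  have hB_mono : Monotone B := fun m n hmn ↦ Metric.ball_subset_ball (by gcongr)
  have hB_estimate (n : ℕ) : NewtonianEstimate X j k p C (B n) := by
    have hn : (0 : ℝ) < n + 1 := n.cast_add_one_pos
    refine .of_preimage_smul_sub hn x₀ (h.mono fun x hx ↦ hball ?_)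
    rw [Set.mem_preimage, mem_ball_zero_iff, norm_smul, Real.norm_of_nonneg hn.le] at hx
    exact mem_ball_iff_norm.2 (lt_of_mul_lt_mul_left hx hn.le)
  have hB_univ : ⋃ n, B n = Set.univ := by
    refine Set.iUnion_eq_univ_iff.2 fun x ↦ ?_
    obtain ⟨n, hn⟩ := exists_nat_gt (‖x‖ / r)
    exact ⟨n, mem_ball_zero_iff.2 ((div_lt_iff₀ hr).1 (hn.trans (lt_add_one _)))⟩
  exact hB_univ ▸ .iUnion_of_directed hp (fun _ ↦ Metric.isOpen_ball) hB_mono.directed_le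
    hB_estimate

/-- If, on a non-empty open set `Ω ⊆ ℝ^d` (`d ≥ 2`), the estimate
`‖DⱼDₖ(Φ ∗ f)‖_{L^p(Ω,X)} ≤ C ‖f‖_{L^p(Ω,X)}` holds for all `f ∈ C_c^∞(Ω, X)`, then
the same estimate holds globally on `ℝ^d`; in particular the second-order Riesz
transform `RⱼRₖ = DⱼDₖ(Φ ∗ ·)` is bounded on `L^p(ℝ^d, X)`. -/
theorem newtonian_estimate_on_domain_implies_global {d : ℕ} (hd : 2 ≤ d)
    {X : Type*} [NormedAddCommGroup X] [NormedSpace ℝ X] [CompleteSpace X]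
    {Ω : Set (EuclideanSpace ℝ (Fin d))} (hΩ : IsOpen Ω) (hΩne : Ω.Nonempty)
    (p : ℝ≥0∞) (hp : 1 < p) (hp' : p ≠ ⊤) (j k : Fin d) (C : ℝ) (hC : 0 < C)
    (hest : ∀ f : EuclideanSpace ℝ (Fin d) → X, ContDiff ℝ (⊤ : ℕ∞) f →
      HasCompactSupport f → tsupport f ⊆ Ω →
      eLpNorm (fun ξ => secondPartial j k (newtonianPotential f) ξ) p
          (volume.restrict Ω) ≤
        ENNReal.ofReal C * eLpNorm f p (volume.restrict Ω)) :
    ∀ f : EuclideanSpace ℝ (Fin d) → X, ContDiff ℝ (⊤ : ℕ∞) f → HasCompactSupport f →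
      eLpNorm (fun ξ => secondPartial j k (newtonianPotential f) ξ) p volume ≤
        ENNReal.ofReal C * eLpNorm f p volume := by
  intro f hf hs
  simpa using newtonian_estimate_on_domain_implies_global_general (hΩ.interior_eq.symm ▸ hΩne)
    (zero_lt_one.trans hp).ne' hest f hf hs (Set.subset_univ _)
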